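/- arXiv:2505.23445 — 2 statements merged into one kernel-verified Lean document; each statement's English description precedes it below -/
import Mathlib

section
/- Let (G, ξ) be a centered bivariate Gaussian vector with covariance matrix [[a, c], [c, b]], a, b > 0, |c| < √(ab), a + c > 0, and M = G + ξ. Then the conditional correlation between G and M given {M > m} tends to 0, with Corr(G, M | M > m) ~ ((a+c)√(a+b+2c))/(m √(ab - c²)) as m → ∞. -/
open MeasureTheory ProbabilityTheory Filter Asymptotics Real

/-- Expectation of `X` conditioned on an event `s` (i.e. `E[X·1ₛ]/P(s)`). -/
noncomputable def condExpEvent {Ω : Type*} [MeasureSpace Ω] (X : Ω → ℝ) (s : Set Ω) : ℝ :=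
  (∫ ω in s, X ω) / (ℙ s).toReal

/-- Variance of `X` conditioned on an event `s`. -/
noncomputable def condVarEvent {Ω : Type*} [MeasureSpace Ω] (X : Ω → ℝ) (s : Set Ω) : ℝ :=
  condExpEvent (fun ω => X ω ^ 2) s - (condExpEvent X s) ^ 2

/-- Covariance of `X` and `Y` conditioned on an event `s`. -/
noncomputable def condCovEvent {Ω : Type*} [MeasureSpace Ω] (X Y : Ω → ℝ) (s : Set Ω) : ℝ :=
  condExpEvent (fun ω => X ω * Y ω) s - condExpEvent X s * condExpEvent Y s


noncomputable def tailJ (s : ℝ) (k : ℕ) (m : ℝ) : ℝ :=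
  ∫ t in Set.Ioi (0:ℝ), t ^ k * Real.exp (-(s⁻¹ * t)) * Real.exp (-(t ^ 2 / (2 * s * m ^ 2)))

lemma tailJ_base (s : ℝ) (hs : 0 < s) (k : ℕ) :
    ∫ t in Set.Ioi (0:ℝ), t ^ k * Real.exp (-(s⁻¹ * t)) = s ^ (k + 1) * (k.factorial : ℝ) := by
  have h := Real.integral_rpow_mul_exp_neg_mul_Ioi (a := (k:ℝ) + 1) (r := s⁻¹) (by positivity)
    (by positivity)
  rw [Real.Gamma_nat_eq_factorial] at h
  simp only [add_sub_cancel_right, Real.rpow_natCast, one_div, inv_inv] at h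
  rw [h]
  norm_cast

lemma tailJ_base_int (s : ℝ) (hs : 0 < s) (k : ℕ) :
    IntegrableOn (fun t : ℝ => t ^ k * Real.exp (-(s⁻¹ * t))) (Set.Ioi (0:ℝ)) := by
  by_contra h
  have h1 := tailJ_base s hs k
  rw [integral_undef h] at h1
  have : 0 < s ^ (k + 1) * (k.factorial : ℝ) := by positivity
  linarith

lemma tailJ_tendsto (s : ℝ) (hs : 0 < s) (k : ℕ) :
    Tendsto (tailJ s k) atTop (nhds (s ^ (k + 1) * (k.factorial : ℝ))) := by
  rw [← tailJ_base s hs k]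
  unfold tailJ
  refine tendsto_integral_filter_of_dominated_convergence
    (fun t : ℝ => t ^ k * Real.exp (-(s⁻¹ * t))) ?_ ?_ (tailJ_base_int s hs k) ?_
  · exact Eventually.of_forall fun m => (by fun_prop : Measurable _).aestronglyMeasurable
  · refine Eventually.of_forall fun m => ?_
    filter_upwards [ae_restrict_mem measurableSet_Ioi] with t ht
    have ht : 0 < t := ht
    rw [Real.norm_of_nonneg (by positivity)]
    refine mul_le_of_le_one_right (by positivity) ?_
    rw [Real.exp_le_one_iff]
    have : 0 ≤ t ^ 2 / (2 * s * m ^ 2) := by positivity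
    linarith
  · refine Eventually.of_forall fun t => ?_
    have h1 : Tendsto (fun m : ℝ => 2 * s * m ^ 2) atTop atTop :=
      (tendsto_pow_atTop (by norm_num)).const_mul_atTop (by positivity)
    have h2 := (Real.continuous_exp.tendsto _).comp
      ((tendsto_const_nhds (x := t ^ 2)).div_atTop h1).neg
    have h3 := h2.const_mul (t ^ k * Real.exp (-(s⁻¹ * t)))
    simpa using h3

lemma pdf_shift (s : NNReal) (hs : s ≠ 0) (m t : ℝ) (hm : 0 < m) :
    gaussianPDFReal 0 s (m + m⁻¹ * t) = gaussianPDFReal 0 s m *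
      (Real.exp (-((s:ℝ)⁻¹ * t)) * Real.exp (-(t ^ 2 / (2 * s * m ^ 2)))) := by
  have hs' : (s:ℝ) ≠ 0 := by exact_mod_cast hs
  simp only [gaussianPDFReal, mul_assoc, ← Real.exp_add]
  congr 3
  field_simp
  ring

lemma tail_moment {Ω : Type*} [MeasureSpace Ω] (M : Ω → ℝ) (hM : Measurable M) (s : NNReal)
    (hs : s ≠ 0) (hlaw : Measure.map M ℙ = gaussianReal 0 s) (k : ℕ) (m : ℝ) (hm : 0 < m) :
    ∫ ω in {ω | m < M ω}, (M ω - m) ^ k =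
      gaussianPDFReal 0 s m / m * tailJ s k m / m ^ k := by
  have h1 : ∫ ω in {ω | m < M ω}, (M ω - m) ^ k =
      ∫ x in Set.Ioi m, (x - m) ^ k ∂(gaussianReal 0 s) := by
    rw [← hlaw, setIntegral_map measurableSet_Ioi
      (by exact (by fun_prop : Measurable _).aestronglyMeasurable) hM.aemeasurable]
    rfl
  have himg : (fun t : ℝ => m + m⁻¹ * t) '' Set.Ioi 0 = Set.Ioi m := by
    ext x
    simp only [Set.mem_image, Set.mem_Ioi]
    constructor
    · rintro ⟨t, ht, rfl⟩
      have : 0 < m⁻¹ * t := by positivity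
      linarith
    · intro hx
      exact ⟨m * (x - m), by nlinarith, by field_simp; ring⟩
  rw [h1, ← integral_indicator measurableSet_Ioi, integral_gaussianReal_eq_integral_smul hs]
  have h2 : ∀ x, gaussianPDFReal 0 s x • (Set.Ioi m).indicator (fun x => (x - m) ^ k) x =
      (Set.Ioi m).indicator (fun x => gaussianPDFReal 0 s x * (x - m) ^ k) x := by
    intro x
    by_cases hx : x ∈ Set.Ioi m <;> simp [hx]
  simp_rw [h2]
  rw [integral_indicator measurableSet_Ioi, ← himg,
    integral_image_eq_integral_abs_deriv_smul (f' := fun _ => m⁻¹) measurableSet_Ioi]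
  · simp only [pdf_shift s hs m _ hm, tailJ]
    rw [mul_div_right_comm, ← integral_const_mul]
    refine integral_congr_ae (Eventually.of_forall fun t => ?_)
    simp only [smul_eq_mul, abs_of_pos (inv_pos.2 hm)]
    rw [add_sub_cancel_left, mul_pow, inv_pow]
    field_simp
  · intro x _
    simpa using (((hasDerivAt_id x).const_mul m⁻¹).const_add m).hasDerivWithinAt
  · intro x _ y _ h
    have : m⁻¹ ≠ 0 := by positivity
    simpa [this] using h

lemma indep_of_law {Ω : Type*} [MeasureSpace Ω] [IsProbabilityMeasure (ℙ : Measure Ω)]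
    (X Z : Ω → ℝ) (hX : Measurable X) (hZ : Measurable Z) (s τ : ℝ) (hs : 0 ≤ s) (hτ : 0 ≤ τ)
    (hlaw : ∀ u v : ℝ, Measure.map (fun ω => u * X ω + v * Z ω) ℙ =
      gaussianReal 0 (Real.toNNReal (u ^ 2 * s + v ^ 2 * τ))) :
    IndepFun X Z ∧ MemLp X 4 ∧ MemLp Z 4 ∧ (∫ ω, Z ω = 0) ∧ (∫ ω, Z ω ^ 2 = τ) := by
  have hLX : Measure.map X ℙ = gaussianReal 0 (Real.toNNReal s) := by simpa using hlaw 1 0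
  have hLZ : Measure.map Z ℙ = gaussianReal 0 (Real.toNNReal τ) := by simpa using hlaw 0 1
  have hLS : Measure.map (X + Z) ℙ = gaussianReal 0 (Real.toNNReal (s + τ)) := by
    have h := hlaw 1 1
    simp only [one_mul, one_pow] at h
    exact h
  have key : ∀ (Y : Ω → ℝ) (r : NNReal), Measurable Y → Measure.map Y ℙ = gaussianReal 0 r →
      MemLp Y 4 ∧ (∫ ω, Y ω = 0) ∧ Var[Y; ℙ] = r := by
    intro Y r hY h
    refine ⟨?_, ?_, ?_⟩
    · have := memLp_id_gaussianReal' (μ := 0) (v := r) 4 (by norm_num)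
      rw [← h] at this
      exact (memLp_map_measure_iff (by fun_prop) hY.aemeasurable).1 this
    · have := integral_id_gaussianReal (μ := 0) (v := r)
      rwa [← h, integral_map hY.aemeasurable (by fun_prop)] at this
    · have := variance_id_gaussianReal (μ := 0) (v := r)
      rwa [← h, variance_map (by fun_prop) hY.aemeasurable] at this
  obtain ⟨x1, x2, x3⟩ := key X _ hX hLX
  obtain ⟨z1, z2, z3⟩ := key Z _ hZ hLZ
  obtain ⟨s1, s2, s3⟩ := key (X + Z) _ (hX.add hZ) hLS
  have x1' : MemLp X 2 := x1.mono_exponent (by norm_num)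
  have z1' : MemLp Z 2 := z1.mono_exponent (by norm_num)
  refine ⟨?_, x1, z1, z2, ?_⟩
  · refine HasGaussianLaw.indepFun_of_covariance_eq_zero ?_ ?_
    · constructor
      refine isGaussian_of_map_eq_gaussianReal fun L => ?_
      refine ⟨0, Real.toNNReal ((L (1, 0)) ^ 2 * s + (L (0, 1)) ^ 2 * τ), ?_⟩
      rw [Measure.map_map (by fun_prop) (by fun_prop), ← hlaw]
      congr 1
      ext ω
      have : (X ω, Z ω) = X ω • ((1:ℝ), (0:ℝ)) + Z ω • ((0:ℝ), (1:ℝ)) := by simp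
      simp only [Function.comp]
      rw [this, map_add, map_smul, map_smul, smul_eq_mul, smul_eq_mul]
      ring
    · have := variance_add x1' z1'
      rw [x3, z3, s3, Real.coe_toNNReal _ hs, Real.coe_toNNReal _ hτ,
        Real.coe_toNNReal _ (by positivity)] at this
      linarith
  · have := variance_eq_sub z1'
    rw [z3, z2, Real.coe_toNNReal _ hτ] at this
    simpa using this.symm

lemma condVar_tail {Ω : Type*} [MeasureSpace Ω] [IsProbabilityMeasure (ℙ : Measure Ω)]
    (M : Ω → ℝ) (hM : Measurable M) (s : NNReal)
    (hs : s ≠ 0) (hlaw : Measure.map M ℙ = gaussianReal 0 s) (hL : MemLp M 4) (m : ℝ) (hm : 0 < m)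
    (hJ : 0 < tailJ s 0 m) :
    0 < (ℙ {ω | m < M ω}).toReal ∧
    condVarEvent M {ω | m < M ω} =
      (tailJ s 2 m / tailJ s 0 m - (tailJ s 1 m / tailJ s 0 m) ^ 2) / m ^ 2 := by
  have h0 := tail_moment M hM s hs hlaw 0 m hm
  have h1 := tail_moment M hM s hs hlaw 1 m hm
  have h2 := tail_moment M hM s hs hlaw 2 m hm
  have hL2 : MemLp M 2 := hL.mono_exponent (by norm_num)
  have i1 : Integrable M := hL2.integrable (by norm_num)
  have i2 : Integrable (fun ω => M ω ^ 2) := hL2.integrable_sq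
  have hp := gaussianPDFReal_pos 0 s m hs
  have hP : (ℙ {ω | m < M ω}).toReal = gaussianPDFReal 0 s m / m * tailJ s 0 m := by
    simpa [Measure.real] using h0
  have e1 : ∫ ω in {ω | m < M ω}, (M ω - m) ^ 1 =
      (∫ ω in {ω | m < M ω}, M ω) - m * (ℙ {ω | m < M ω}).toReal := by
    simp only [pow_one]
    rw [integral_sub i1.integrableOn (integrable_const _)]
    simp [Measure.real, mul_comm]
  have e2 : ∫ ω in {ω | m < M ω}, (M ω - m) ^ 2 =
      (∫ ω in {ω | m < M ω}, M ω ^ 2) - 2 * m * (∫ ω in {ω | m < M ω}, M ω)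
        + m ^ 2 * (ℙ {ω | m < M ω}).toReal := by
    have : ∀ ω, (M ω - m) ^ 2 = M ω ^ 2 - 2 * m * M ω + m ^ 2 := fun ω => by ring
    simp only [this]
    rw [integral_add, integral_sub i2.integrableOn (i1.integrableOn.const_mul _),
      integral_const_mul]
    · simp [Measure.real, mul_comm]
    · exact i2.integrableOn.sub (i1.integrableOn.const_mul _)
    · exact integrable_const _
  have hP0 : 0 < (ℙ {ω | m < M ω}).toReal := by rw [hP]; positivity
  refine ⟨hP0, ?_⟩
  unfold condVarEvent condExpEvent
  rw [e1] at h1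
  rw [e2] at h2
  have f1 : (∫ ω in {ω | m < M ω}, M ω) = gaussianPDFReal 0 s m / m * tailJ s 1 m / m
      + m * (ℙ {ω | m < M ω}).toReal := by
    rw [pow_one] at h1; linarith
  have f2 : (∫ ω in {ω | m < M ω}, M ω ^ 2) = gaussianPDFReal 0 s m / m * tailJ s 2 m / m ^ 2
      + 2 * m * (∫ ω in {ω | m < M ω}, M ω)
        - m ^ 2 * (ℙ {ω | m < M ω}).toReal := by linarith
  rw [f2, f1, hP]
  field_simp
  ring

lemma cond_decomp {Ω : Type*} [MeasureSpace Ω] [IsProbabilityMeasure (ℙ : Measure Ω)]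
    (G M Z : Ω → ℝ) (hM : Measurable M) (hZ : Measurable Z) (β τ : ℝ)
    (hG : ∀ ω, G ω = β * M ω + Z ω)
    (hI : IndepFun M Z) (hM4 : MemLp M 4) (hZ4 : MemLp Z 4) (hZ0 : ∫ ω, Z ω = 0)
    (hZ2 : ∫ ω, Z ω ^ 2 = τ) (m : ℝ) (hP : 0 < (ℙ {ω | m < M ω}).toReal) :
    condCovEvent G M {ω | m < M ω} = β * condVarEvent M {ω | m < M ω} ∧
    condVarEvent G {ω | m < M ω} = β ^ 2 * condVarEvent M {ω | m < M ω} + τ := by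
  have hS : MeasurableSet {ω | m < M ω} := measurableSet_lt measurable_const hM
  have hM2 : MemLp M 2 := hM4.mono_exponent (by norm_num)
  have hZ2' : MemLp Z 2 := hZ4.mono_exponent (by norm_num)
  have iM : Integrable M := hM2.integrable (by norm_num)
  have iM2 : Integrable (fun ω => M ω ^ 2) := hM2.integrable_sq
  have iZ : Integrable Z := hZ2'.integrable (by norm_num)
  have iZ2 : Integrable (fun ω => Z ω ^ 2) := hZ2'.integrable_sq
  have iMZ : Integrable (fun ω => M ω * Z ω) := hM2.integrable_mul hZ2'
  have key : ∀ f g : ℝ → ℝ, Measurable f → Measurable g →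
      ∫ ω in {ω | m < M ω}, f (M ω) * g (Z ω) =
        (∫ ω in {ω | m < M ω}, f (M ω)) * ∫ ω, g (Z ω) := by
    intro f g hf hg
    have h1 := hI.integral_fun_comp_mul_comp (f := (Set.Ioi m).indicator f) (g := g)
      hM.aemeasurable hZ.aemeasurable
      (hf.indicator measurableSet_Ioi).aestronglyMeasurable hg.aestronglyMeasurable
    rw [← integral_indicator hS, ← integral_indicator hS]
    have e1 : ({ω | m < M ω}.indicator fun ω => f (M ω) * g (Z ω)) =
        fun ω => (Set.Ioi m).indicator f (M ω) * g (Z ω) := by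
      ext ω
      by_cases h : m < M ω <;> simp [Set.indicator, h]
    have e2 : ({ω | m < M ω}.indicator fun ω => f (M ω)) =
        fun ω => (Set.Ioi m).indicator f (M ω) := by
      ext ω
      by_cases h : m < M ω <;> simp [Set.indicator, h]
    rw [e1, e2]
    exact h1
  have k1 : ∫ ω in {ω | m < M ω}, Z ω = 0 := by
    have := key (fun _ => 1) (fun z => z) (by fun_prop) (by fun_prop)
    simpa [hZ0] using this
  have k2 : ∫ ω in {ω | m < M ω}, M ω * Z ω = 0 := by
    have := key (fun x => x) (fun z => z) (by fun_prop) (by fun_prop)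
    simpa [hZ0] using this
  have k3 : ∫ ω in {ω | m < M ω}, Z ω ^ 2 = (ℙ {ω | m < M ω}).toReal * τ := by
    have := key (fun _ => 1) (fun z => z ^ 2) (by fun_prop) (by fun_prop)
    simpa [hZ2, Measure.real] using this
  have g1 : ∫ ω in {ω | m < M ω}, G ω = β * ∫ ω in {ω | m < M ω}, M ω := by
    simp only [hG]
    rw [integral_add (iM.integrableOn.const_mul _) iZ.integrableOn, integral_const_mul, k1, add_zero]
  have g2 : ∫ ω in {ω | m < M ω}, G ω * M ω = β * ∫ ω in {ω | m < M ω}, M ω ^ 2 := by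
    have : ∀ ω, G ω * M ω = β * M ω ^ 2 + M ω * Z ω := fun ω => by rw [hG]; ring
    simp only [this]
    rw [integral_add (iM2.integrableOn.const_mul _) iMZ.integrableOn, integral_const_mul, k2,
      add_zero]
  have g3 : ∫ ω in {ω | m < M ω}, G ω ^ 2 = β ^ 2 * (∫ ω in {ω | m < M ω}, M ω ^ 2)
      + (ℙ {ω | m < M ω}).toReal * τ := by
    have : ∀ ω, G ω ^ 2 = (β ^ 2 * M ω ^ 2 + 2 * β * (M ω * Z ω)) + Z ω ^ 2 :=
      fun ω => by rw [hG]; ring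
    simp only [this]
    have hi : IntegrableOn (fun ω => β ^ 2 * M ω ^ 2 + 2 * β * (M ω * Z ω)) {ω | m < M ω} :=
      (iM2.integrableOn.const_mul _).add (iMZ.integrableOn.const_mul _)
    rw [integral_add hi iZ2.integrableOn, integral_add (iM2.integrableOn.const_mul _) (iMZ.integrableOn.const_mul _),
      integral_const_mul, integral_const_mul, k2, k3, mul_zero, add_zero]
  unfold condCovEvent condVarEvent condExpEvent
  rw [g1, g2, g3]
  constructor
  · ring
  · field_simp
    ring

/-- Benign Goodhart: the conditional correlation between goal and proxy vanishes,
`Corr(G, M | M > m) ~ ((a+c)√(a+b+2c))/(m √(ab - c²))` as `m → ∞`. -/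
theorem gaussian_condCorr_goal_proxy {Ω : Type*} [MeasureSpace Ω] [IsProbabilityMeasure (ℙ : Measure Ω)]
    (G ξ : Ω → ℝ) (hG : Measurable G) (hξ : Measurable ξ)
    (a b c : ℝ) (ha : 0 < a) (hb : 0 < b) (hc : |c| < Real.sqrt (a * b))
    (hlaw : ∀ u v : ℝ, Measure.map (fun ω => u * G ω + v * ξ ω) ℙ =
      gaussianReal 0 (Real.toNNReal (u ^ 2 * a + 2 * u * v * c + v ^ 2 * b))) (hac : 0 < a + c) :
    Tendsto (fun m : ℝ =>
        condCovEvent G (fun ω => G ω + ξ ω) {ω | m < G ω + ξ ω} /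
          Real.sqrt (condVarEvent G {ω | m < G ω + ξ ω} *
            condVarEvent (fun ω => G ω + ξ ω) {ω | m < G ω + ξ ω}))
      atTop (nhds 0) ∧
    (fun m : ℝ =>
        condCovEvent G (fun ω => G ω + ξ ω) {ω | m < G ω + ξ ω} /
          Real.sqrt (condVarEvent G {ω | m < G ω + ξ ω} *
            condVarEvent (fun ω => G ω + ξ ω) {ω | m < G ω + ξ ω}))
      ~[atTop] (fun m : ℝ =>
        (a + c) * Real.sqrt (a + b + 2 * c) / (m * Real.sqrt (a * b - c ^ 2))) := by
  have hab : 0 ≤ a * b := by positivity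
  have hD : 0 < a * b - c ^ 2 := by
    have h1 : |c| ^ 2 < Real.sqrt (a * b) ^ 2 := by gcongr
    rw [sq_abs, Real.sq_sqrt hab] at h1
    linarith
  have hs : 0 < a + b + 2 * c := by
    by_contra h
    have h1 : a + c + (b + c) ≤ 0 := by linarith
    nlinarith [sq_nonneg (a + c)]
  have hlM : Measure.map (fun ω => G ω + ξ ω) ℙ =
      gaussianReal 0 (Real.toNNReal (a + b + 2 * c)) := by
    have h := hlaw 1 1
    simp only [one_mul, one_pow, mul_one] at h
    rw [h]
    congr 2
    ring
  obtain ⟨s, hsdef⟩ : ∃ s, s = a + b + 2 * c := ⟨_, rfl⟩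
  rw [← hsdef] at hs hlM ⊢
  set D := a * b - c ^ 2 with hDdef
  set M : Ω → ℝ := fun ω => G ω + ξ ω with hMdef
  have hM : Measurable M := hG.add hξ
  set β := (a + c) / s with hβ
  have hβ0 : 0 < β := by positivity
  set Z : Ω → ℝ := fun ω => G ω - β * M ω with hZdef
  have hZ : Measurable Z := by fun_prop
  have hτ : 0 < D / s := by positivity
  obtain ⟨hI, hM4, hZ4, hZ0, hZ2⟩ := indep_of_law M Z hM hZ s (D / s) hs.le hτ.le (by
    intro u v
    have h := hlaw (u + v - v * β) (u - v * β)
    convert h using 2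
    · ext ω
      simp only [hZdef, hMdef]
      ring
    · congr 1
      rw [hβ, hDdef]
      field_simp
      rw [hsdef]
      ring)
  have hsr : ((Real.toNNReal s : NNReal) : ℝ) = s := Real.coe_toNNReal _ hs.le
  have hs0 : Real.toNNReal s ≠ 0 := by simpa using hs
  set V : ℝ → ℝ := fun m => condVarEvent M {ω | m < M ω} with hV
  have J0 := tailJ_tendsto s hs 0
  have J1 := tailJ_tendsto s hs 1
  have J2 := tailJ_tendsto s hs 2
  have hJpos : ∀ᶠ m in atTop, 0 < tailJ s 0 m :=
    J0.eventually (lt_mem_nhds (by simpa using hs))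
  have hprop : ∀ᶠ m in atTop, 0 < m ∧ 0 < (ℙ {ω | m < M ω}).toReal ∧ V m =
      (tailJ s 2 m / tailJ s 0 m - (tailJ s 1 m / tailJ s 0 m) ^ 2) / m ^ 2 := by
    filter_upwards [hJpos, eventually_gt_atTop 0] with m h1 h2
    have := condVar_tail M hM _ hs0 hlM hM4 m h2 (by rwa [hsr])
    rw [hsr] at this
    exact ⟨h2, this⟩
  have hmV : Tendsto (fun m => m ^ 2 * V m) atTop (nhds (s ^ 2)) := by
    have h := (J2.div J0 (by simpa using hs.ne')).sub ((J1.div J0 (by simpa using hs.ne')).pow 2)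
    have e : s ^ (2 + 1) * (Nat.factorial 2 : ℝ) / (s ^ (0 + 1) * (Nat.factorial 0 : ℝ)) -
        (s ^ (1 + 1) * (Nat.factorial 1 : ℝ) / (s ^ (0 + 1) * (Nat.factorial 0 : ℝ))) ^ 2
          = s ^ 2 := by
      simp [Nat.factorial]
      field_simp
      ring
    rw [e] at h
    refine h.congr' ?_
    filter_upwards [hprop] with m ⟨h1, _, h2⟩
    rw [h2, mul_div_cancel₀ _ (by positivity)]
    rfl
  have hV0 : Tendsto V atTop (nhds 0) := by
    have h := hmV.div_atTop (tendsto_pow_atTop (α := ℝ) (two_ne_zero))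
    refine h.congr' ?_
    filter_upwards [eventually_gt_atTop 0] with m h1
    field_simp
  have hpos : ∀ᶠ m in atTop, 0 < m ^ 2 * V m := hmV.eventually (lt_mem_nhds (by positivity))
  set C : ℝ → ℝ := fun m : ℝ =>
        condCovEvent G M {ω | m < M ω} /
          Real.sqrt (condVarEvent G {ω | m < M ω} * condVarEvent M {ω | m < M ω}) with hC
  have hCform : ∀ᶠ m in atTop, C m =
      β * Real.sqrt (m ^ 2 * V m) / Real.sqrt (β ^ 2 * V m + D / s) / m := by
    filter_upwards [hprop, hpos] with m ⟨h1, h2, _⟩ h4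
    have hVp : 0 < V m := by
      by_contra h
      nlinarith [sq_nonneg m]
    obtain ⟨d1, d2⟩ := cond_decomp G M Z hM hZ β (D / s) (fun ω => by simp [hZdef]) hI hM4 hZ4
      hZ0 hZ2 m h2
    simp only [hC]
    rw [d1, d2]
    change β * V m / Real.sqrt ((β ^ 2 * V m + D / s) * V m) = _
    have h5 : 0 < β ^ 2 * V m + D / s := by positivity
    rw [Real.sqrt_mul h5.le, Real.sqrt_mul (by positivity), Real.sqrt_sq h1.le]
    have h6 := Real.sqrt_pos.2 h5
    have h7 := Real.sqrt_pos.2 hVp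
    have h8 := Real.sq_sqrt hVp.le
    field_simp
    rw [h8]
  have hlim : Tendsto (fun m => β * Real.sqrt (m ^ 2 * V m) / Real.sqrt (β ^ 2 * V m + D / s))
      atTop (nhds ((a + c) * Real.sqrt s / Real.sqrt D)) := by
    have hn : Tendsto (fun m => β * Real.sqrt (m ^ 2 * V m)) atTop
        (nhds (β * Real.sqrt (s ^ 2))) := (hmV.sqrt).const_mul β
    have hd : Tendsto (fun m => Real.sqrt (β ^ 2 * V m + D / s)) atTop
        (nhds (Real.sqrt (β ^ 2 * 0 + D / s))) := ((hV0.const_mul _).add_const _).sqrt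
    have h := hn.div hd (by
      rw [mul_zero, zero_add]
      exact (Real.sqrt_pos.2 hτ).ne')
    have e : β * Real.sqrt (s ^ 2) / Real.sqrt (β ^ 2 * 0 + D / s) =
        (a + c) * Real.sqrt s / Real.sqrt D := by
      rw [mul_zero, zero_add, Real.sqrt_sq hs.le, Real.sqrt_div hD.le, hβ]
      have := Real.sqrt_pos.2 hD
      have := Real.sqrt_pos.2 hs
      field_simp
    rw [e] at h
    exact h
  constructor
  · have h := hlim.div_atTop tendsto_id
    refine h.congr' ?_
    filter_upwards [hCform] with m hm
    exact hm.symm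
  · have hL : (a + c) * Real.sqrt s / Real.sqrt D ≠ 0 := by
      have := Real.sqrt_pos.2 hD
      have := Real.sqrt_pos.2 hs
      positivity
    have h1 := (isEquivalent_const_iff_tendsto hL).2 hlim
    have h2 := h1.div (IsEquivalent.refl (u := fun m : ℝ => m))
    refine (h2.congr_left ?_).congr_right ?_
    · filter_upwards [hCform] with m hm
      exact hm.symm
    · refine Eventually.of_forall fun m => ?_
      simp only [Pi.div_apply, Function.const]
      rw [div_div, mul_comm m]
end

section
/- Let (G, ξ) be a centered bivariate Gaussian vector with covariance matrix [[a, c], [c, b]], a, b > 0, |c| < √(ab), and M = G + ξ. Then Cov(G, ξ | M > m) → (c² - ab)/(a + b + 2c) as m → ∞; more precisely Cov(G, ξ | M > m) = (c²-ab)/(a+b+2c) + (a+c)(b+c)/m² + o(m⁻²). -/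
open MeasureTheory ProbabilityTheory Filter Asymptotics Real

lemma aux_tendsto (s : ℝ) (hs : 0 < s) (k : ℕ) :
    Tendsto (fun m : ℝ => ∫ t in Set.Ioi (0:ℝ), t ^ k * exp (-t - s * t ^ 2 / (2 * m ^ 2))) atTop
      (nhds (k.factorial : ℝ)) := by
  have hG : (k.factorial : ℝ) = ∫ t in Set.Ioi (0:ℝ), t ^ k * exp (-t) := by
    rw [← Real.Gamma_nat_eq_factorial, Real.Gamma_eq_integral (by positivity)]
    refine setIntegral_congr_fun measurableSet_Ioi fun t ht => ?_
    simp [mul_comm]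
  have hI : IntegrableOn (fun t : ℝ => t ^ k * exp (-t)) (Set.Ioi 0) := by
    have := Real.GammaIntegral_convergent (s := (k:ℝ) + 1) (by positivity)
    refine this.congr_fun (fun t ht => ?_) measurableSet_Ioi
    simp [mul_comm]
  rw [hG]
  refine tendsto_integral_filter_of_dominated_convergence (fun t : ℝ => t ^ k * exp (-t)) ?_ ?_ hI ?_
  · exact Eventually.of_forall fun m => by
      apply Measurable.aestronglyMeasurable; fun_prop
  · refine Eventually.of_forall fun m => ?_
    filter_upwards [ae_restrict_mem measurableSet_Ioi] with t ht
    have ht : 0 < t := ht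
    rw [Real.norm_of_nonneg (by positivity)]
    gcongr
    have : 0 ≤ s * t ^ 2 / (2 * m ^ 2) := by positivity
    linarith
  · refine Eventually.of_forall fun t => ?_
    refine Tendsto.const_mul _ ((Real.continuous_exp.tendsto _).comp ?_)
    have : Tendsto (fun m : ℝ => s * t ^ 2 / (2 * m ^ 2)) atTop (nhds 0) := by
      apply Tendsto.const_div_atTop
      exact (tendsto_pow_atTop (by norm_num)).const_mul_atTop (by norm_num)
    simpa using this.const_sub (-t)

lemma aux_gauss (s m : ℝ) (hs : 0 < s) (hm : 0 < m) (k : ℕ) :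
    ∫ x in Set.Ioi m, (x - m) ^ k ∂(gaussianReal 0 s.toNNReal) =
      ((√(2 * π * s))⁻¹ * exp (- m ^ 2 / (2 * s)) * (s / m)) * ((s / m) ^ k *
        ∫ t in Set.Ioi (0:ℝ), t ^ k * exp (-t - s * t ^ 2 / (2 * m ^ 2))) := by
  have hv : s.toNNReal ≠ 0 := by simpa using hs
  have hsm : 0 < s / m := by positivity
  rw [← integral_indicator measurableSet_Ioi, integral_gaussianReal_eq_integral_smul hv]
  have h1 : ∫ x, gaussianPDFReal 0 s.toNNReal x • (Set.Ioi m).indicator (fun x => (x - m) ^ k) x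
      = ∫ x in Set.Ioi m, gaussianPDFReal 0 s.toNNReal x * (x - m) ^ k := by
    rw [← integral_indicator measurableSet_Ioi]
    congr 1; ext x
    by_cases hx : x ∈ Set.Ioi m <;> simp [Set.indicator, smul_eq_mul]
  rw [h1]
  have h2 : ∫ x in Set.Ioi m, gaussianPDFReal 0 s.toNNReal x * (x - m) ^ k
      = ∫ x in Set.Ioi 0, gaussianPDFReal 0 s.toNNReal (x + m) * x ^ k := by
    have := (measurePreserving_add_right (volume : Measure ℝ) m).setIntegral_preimage_emb
      (measurableEmbedding_addRight m) (fun x => gaussianPDFReal 0 s.toNNReal x * (x - m) ^ k)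
      (Set.Ioi m)
    rw [← this]
    simp
  rw [h2]
  have h3 := integral_comp_mul_left_Ioi
    (fun x => gaussianPDFReal 0 s.toNNReal (x + m) * x ^ k) 0 hsm
  rw [mul_zero] at h3
  have h4 : ∫ x in Set.Ioi 0, gaussianPDFReal 0 s.toNNReal (x + m) * x ^ k
    = (s / m) * ∫ x in Set.Ioi 0, gaussianPDFReal 0 s.toNNReal (s / m * x + m) * (s / m * x) ^ k := by
    rw [h3, smul_eq_mul, ← mul_assoc, mul_inv_cancel₀ hsm.ne', one_mul]
  rw [h4]
  have h5 : ∀ x : ℝ, gaussianPDFReal 0 s.toNNReal (s / m * x + m) * (s / m * x) ^ k =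
     ((√(2 * π * s))⁻¹ * exp (- m ^ 2 / (2 * s)) * (s / m) ^ k) *
       (x ^ k * exp (-x - s * x ^ 2 / (2 * m ^ 2))) := by
    intro x
    have : exp (-(s / m * x + m - 0) ^ 2 / (2 * s)) =
        exp (- m ^ 2 / (2 * s)) * exp (-x - s * x ^ 2 / (2 * m ^ 2)) := by
      rw [← exp_add]; congr 1; field_simp; ring
    simp only [gaussianPDFReal, Real.coe_toNNReal s hs.le]
    rw [this, mul_pow]; ring
  simp_rw [h5]
  rw [integral_const_mul]; ring

lemma aux_indep {Ω : Type*} [MeasureSpace Ω] [IsProbabilityMeasure (ℙ : Measure Ω)]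
    (M R : Ω → ℝ) (hM : Measurable M) (hR : Measurable R) (s r : ℝ) (hs : 0 ≤ s) (hr : 0 ≤ r)
    (h : ∀ p q : ℝ, Measure.map (fun ω => p * M ω + q * R ω) ℙ =
      gaussianReal 0 (Real.toNNReal (p ^ 2 * s + q ^ 2 * r))) : IndepFun M R := by
  rw [indepFun_iff_charFunDual_prod hM.aemeasurable hR.aemeasurable]
  intro L
  simp only [charFunDual_eq_charFun_map_one]
  rw [Measure.map_map (by fun_prop) (by fun_prop), Measure.map_map (by fun_prop) (by fun_prop),
    Measure.map_map (by fun_prop) (by fun_prop)]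
  have e (x y : ℝ) : L (x, y) = L (1, 0) * x + L (0, 1) * y := by
    have : ((x, y) : ℝ × ℝ) = x • (1, 0) + y • (0, 1) := by simp
    rw [this, map_add, map_smul, map_smul]; simp [mul_comm]
  have e1 : (⇑L ∘ fun ω => (M ω, R ω)) = fun ω => L (1, 0) * M ω + L (0, 1) * R ω := by
    ext ω; simp [e (M ω)]
  have e2 : (⇑(L.comp (.inl ℝ ℝ ℝ)) ∘ M) = fun ω => L (1, 0) * M ω + 0 * R ω := by
    ext ω; simp [e (M ω)]
  have e3 : (⇑(L.comp (.inr ℝ ℝ ℝ)) ∘ R) = fun ω => 0 * M ω + L (0, 1) * R ω := by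
    ext ω; simp [e 0 (R ω)]
  rw [e1, e2, e3, h, h, h, charFun_gaussianReal, charFun_gaussianReal, charFun_gaussianReal,
    ← Complex.exp_add, Real.coe_toNNReal _ (by positivity), Real.coe_toNNReal _ (by positivity),
    Real.coe_toNNReal _ (by positivity)]
  congr 1
  push_cast
  ring

lemma aux_split {Ω : Type*} [MeasureSpace Ω]
    (M R : Ω → ℝ) (hM : Measurable M) (hR : Measurable R) (h : IndepFun M R) (m : ℝ)
    (f g : ℝ → ℝ) (hf : Measurable f) (hg : Measurable g) :
    ∫ ω in {ω | m < M ω}, f (M ω) * g (R ω) = (∫ ω in {ω | m < M ω}, f (M ω)) * ∫ ω, g (R ω) := by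
  have hA : MeasurableSet {ω | m < M ω} := measurableSet_lt measurable_const hM
  rw [← integral_indicator hA, ← integral_indicator hA]
  have := h.integral_fun_comp_mul_comp (f := (Set.Ioi m).indicator f) (g := g)
    hM.aemeasurable hR.aemeasurable (hf.indicator measurableSet_Ioi).aestronglyMeasurable
    hg.aestronglyMeasurable
  have e1 : ({ω | m < M ω}.indicator fun ω => f (M ω) * g (R ω)) =
      fun ω => (Set.Ioi m).indicator f (M ω) * g (R ω) := by
    ext ω; by_cases hx : m < M ω <;> simp [Set.indicator, hx]
  have e2 : ({ω | m < M ω}.indicator fun ω => f (M ω)) =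
      fun ω => (Set.Ioi m).indicator f (M ω) := by
    ext ω; by_cases hx : m < M ω <;> simp [Set.indicator, hx]
  rw [e1, e2]
  exact this

lemma aux_moment {Ω : Type*} [MeasureSpace Ω]
    (M : Ω → ℝ) (hM : Measurable M) (v : NNReal) (h : Measure.map M ℙ = gaussianReal 0 v) :
    MemLp M 2 ∧ (∫ ω, M ω) = 0 ∧ (∫ ω, M ω ^ 2) = v := by
  have h1 : (∫ ω, M ω) = 0 := by
    rw [← integral_id_gaussianReal (μ := 0) (v := v), ← h, integral_map hM.aemeasurable (by fun_prop)]
  refine ⟨?_, h1, ?_⟩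
  · have := memLp_id_gaussianReal (μ := 0) (v := v) 2
    rw [← h, memLp_map_measure_iff (by fun_prop) hM.aemeasurable] at this
    simpa using this
  · have h2 := variance_fun_id_gaussianReal (μ := 0) (v := v)
    rw [variance_eq_integral (by fun_prop)] at h2
    simp only [integral_id_gaussianReal, sub_zero] at h2
    rw [← h2, ← h, integral_map hM.aemeasurable (by fun_prop)]

lemma aux_cov {Ω : Type*} [MeasureSpace Ω] [IsProbabilityMeasure (ℙ : Measure Ω)]
    (G ξ M R : Ω → ℝ) (hM : Measurable M) (hR : Measurable R) (h : IndepFun M R) (α β m : ℝ)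
    (v w : NNReal) (hMl : Measure.map M ℙ = gaussianReal 0 v)
    (hRl : Measure.map R ℙ = gaussianReal 0 w)
    (hG : ∀ ω, G ω = α * M ω + R ω) (hξ : ∀ ω, ξ ω = β * M ω - R ω)
    (J : ℕ → ℝ) (hJ : ∀ k, J k = ∫ x in Set.Ioi m, (x - m) ^ k ∂(gaussianReal 0 v))
    (hJ0 : J 0 ≠ 0) :
    condCovEvent G ξ {ω | m < M ω} = α * β * (J 2 / J 0 - (J 1 / J 0) ^ 2) - w := by
  have hA : MeasurableSet {ω | m < M ω} := measurableSet_lt measurable_const hM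
  obtain ⟨M1, M2, M3⟩ := aux_moment M hM v hMl
  obtain ⟨R1, R2, R3⟩ := aux_moment R hR w hRl
  set A := {ω | m < M ω} with hAdef
  have hJ' : ∀ k, J k = ∫ ω in A, (M ω - m) ^ k := by
    intro k
    rw [hJ, ← hMl, setIntegral_map measurableSet_Ioi (by fun_prop) hM.aemeasurable]
    rfl
  have iM : Integrable M := M1.integrable (by norm_num)
  have iR : Integrable R := R1.integrable (by norm_num)
  have iM2 : Integrable (fun ω => M ω ^ 2) := M1.integrable_sq
  have iR2 : Integrable (fun ω => R ω ^ 2) := R1.integrable_sq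
  have iMR : Integrable (fun ω => M ω * R ω) := h.integrable_mul iM iR
  have p0 : (ℙ A).toReal = J 0 := by
    rw [hJ']; simp [Measure.real]
  have iC : ∀ c : ℝ, Integrable (fun _ : Ω => c) := fun c => integrable_const c
  have cI : ∀ c : ℝ, ∫ ω in A, c = J 0 * c := by
    intro c; rw [← p0]; simp [Measure.real]
  have E1 : ∫ ω in A, M ω = J 1 + m * J 0 := by
    rw [hJ' 1]
    simp only [pow_one]
    rw [integral_sub iM.integrableOn (iC m).integrableOn, cI]; ring
  have E2 : ∫ ω in A, M ω ^ 2 = J 2 + 2 * m * J 1 + m ^ 2 * J 0 := by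
    have e : ∀ ω, M ω ^ 2 = (M ω - m) ^ 2 + (2 * m * (M ω - m) ^ 1 + m ^ 2) := fun ω => by ring
    have i1 : Integrable (fun ω => M ω - m) := iM.sub (iC m)
    have i2 : Integrable (fun ω => (M ω - m) ^ 2) := (M1.sub (memLp_const m)).integrable_sq
    simp_rw [e]
    have i3 : Integrable (fun ω => 2 * m * (M ω - m) ^ 1) := by simpa using i1.const_mul (2 * m)
    have i4 : Integrable (fun ω => 2 * m * (M ω - m) ^ 1 + m ^ 2) := i3.add (iC _)
    rw [integral_add i2.integrableOn i4.integrableOn,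
      integral_add i3.integrableOn (iC _).integrableOn,
      integral_const_mul, cI, ← hJ', ← hJ']
    ring
  have ER : ∫ ω in A, R ω = 0 := by
    have := aux_split M R hM hR h m (fun _ => 1) (fun x => x) (by fun_prop) (by fun_prop)
    simpa [R2] using this
  have ER2 : ∫ ω in A, R ω ^ 2 = J 0 * w := by
    have := aux_split M R hM hR h m (fun _ => 1) (fun x => x ^ 2) (by fun_prop) (by fun_prop)
    rw [R3, cI] at this
    simpa using this
  have EMR : ∫ ω in A, M ω * R ω = 0 := by
    have := aux_split M R hM hR h m (fun x => x) (fun x => x) (by fun_prop) (by fun_prop)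
    simpa [R2] using this
  have EG : ∫ ω in A, G ω = α * (J 1 + m * J 0) := by
    simp_rw [hG]
    rw [integral_add (iM.const_mul α).integrableOn iR.integrableOn, integral_const_mul, ER, E1]
    ring
  have Eξ : ∫ ω in A, ξ ω = β * (J 1 + m * J 0) := by
    simp_rw [hξ]
    rw [integral_sub (iM.const_mul β).integrableOn iR.integrableOn, integral_const_mul, ER, E1]
    ring
  have EGξ : ∫ ω in A, G ω * ξ ω = α * β * (J 2 + 2 * m * J 1 + m ^ 2 * J 0) - J 0 * w := by
    have e : ∀ ω, G ω * ξ ω = (α * β * M ω ^ 2 + (β - α) * (M ω * R ω)) - R ω ^ 2 := fun ω => by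
      rw [hG, hξ]; ring
    simp_rw [e]
    have i5 : Integrable (fun ω => α * β * M ω ^ 2 + (β - α) * (M ω * R ω)) :=
      (iM2.const_mul _).add (iMR.const_mul _)
    rw [integral_sub i5.integrableOn iR2.integrableOn,
      integral_add (iM2.const_mul _).integrableOn (iMR.const_mul _).integrableOn,
      integral_const_mul, integral_const_mul, EMR, ER2, E2]
    ring
  unfold condCovEvent condExpEvent
  rw [EG, Eξ, EGξ, p0]
  field_simp
  ring

/-- Conditional covariance of goal and discrepancy:
`Cov(G, ξ | M > m) → (c² - ab)/(a+b+2c)`, and more precisely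
`Cov(G, ξ | M > m) = (c²-ab)/(a+b+2c) + (a+c)(b+c)/m² + o(m⁻²)`. -/
theorem gaussian_condCov_goal_discrepancy {Ω : Type*} [MeasureSpace Ω] [IsProbabilityMeasure (ℙ : Measure Ω)]
    (G ξ : Ω → ℝ) (hG : Measurable G) (hξ : Measurable ξ)
    (a b c : ℝ) (ha : 0 < a) (hb : 0 < b) (hc : |c| < Real.sqrt (a * b))
    (hlaw : ∀ u v : ℝ, Measure.map (fun ω => u * G ω + v * ξ ω) ℙ =
      gaussianReal 0 (Real.toNNReal (u ^ 2 * a + 2 * u * v * c + v ^ 2 * b))) :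
    Tendsto (fun m : ℝ => condCovEvent G ξ {ω | m < G ω + ξ ω}) atTop
      (nhds ((c ^ 2 - a * b) / (a + b + 2 * c))) ∧
    (fun m : ℝ => condCovEvent G ξ {ω | m < G ω + ξ ω} -
        ((c ^ 2 - a * b) / (a + b + 2 * c) + (a + c) * (b + c) / m ^ 2))
      =o[atTop] (fun m : ℝ => m ^ (-(2 : ℤ))) := by
  have hab : 0 < a * b := mul_pos ha hb
  have hc2 : c ^ 2 < a * b := by
    have := (Real.lt_sqrt (abs_nonneg c)).1 hc
    rwa [sq_abs] at this
  have hs : 0 < a + b + 2 * c := by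
    nlinarith [sq_nonneg (a - b), sq_nonneg (a + b + 2 * c), sq_nonneg (a + b - 2 * c)]
  set s := a + b + 2 * c with hsdef
  have hr : 0 ≤ (a * b - c ^ 2) / s := div_nonneg (by linarith) hs.le
  set α := (a + c) / s with hα
  set β := (b + c) / s with hβ
  have hαβ : α + β = 1 := by rw [hα, hβ]; field_simp; rw [hsdef]; ring
  have hMm : Measurable (fun ω => G ω + ξ ω) := hG.add hξ
  have hRm : Measurable (fun ω => β * G ω - α * ξ ω) := (hG.const_mul _).sub (hξ.const_mul _)
  have hlaw2 : ∀ p q : ℝ, Measure.map (fun ω => p * (G ω + ξ ω) + q * (β * G ω - α * ξ ω)) ℙ =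
      gaussianReal 0 (Real.toNNReal (p ^ 2 * s + q ^ 2 * ((a * b - c ^ 2) / s))) := by
    intro p q
    have h := hlaw (p + q * β) (p - q * α)
    have e1 : (fun ω => p * (G ω + ξ ω) + q * (β * G ω - α * ξ ω)) =
      fun ω => (p + q * β) * G ω + (p - q * α) * ξ ω := by ext ω; ring
    have e2 : (p + q * β) ^ 2 * a + 2 * (p + q * β) * (p - q * α) * c + (p - q * α) ^ 2 * b
      = p ^ 2 * s + q ^ 2 * ((a * b - c ^ 2) / s) := by
      rw [hα, hβ]; field_simp; rw [hsdef]; ring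
    rw [e1, h, e2]
  have hind := aux_indep _ _ hMm hRm s _ hs.le hr hlaw2
  have hMl : Measure.map (fun ω => G ω + ξ ω) ℙ = gaussianReal 0 s.toNNReal := by
    simpa using hlaw2 1 0
  have hRl : Measure.map (fun ω => β * G ω - α * ξ ω) ℙ =
      gaussianReal 0 ((a * b - c ^ 2) / s).toNNReal := by
    simpa using hlaw2 0 1
  let I : ℕ → ℝ → ℝ := fun k m => ∫ t in Set.Ioi (0:ℝ), t ^ k * exp (-t - s * t ^ 2 / (2 * m ^ 2))
  have hI : ∀ k, Tendsto (I k) atTop (nhds (k.factorial : ℝ)) := fun k => aux_tendsto s hs k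
  have hI0 : ∀ᶠ m in atTop, 0 < I 0 m := (hI 0).eventually (lt_mem_nhds (by simp))
  have key : ∀ᶠ m in atTop, condCovEvent G ξ {ω | m < G ω + ξ ω} =
      (a + c) * (b + c) / m ^ 2 * (I 2 m / I 0 m - (I 1 m / I 0 m) ^ 2) + (c ^ 2 - a * b) / s := by
    filter_upwards [hI0, eventually_gt_atTop 0] with m h0 hm
    set K := (√(2 * π * s))⁻¹ * exp (- m ^ 2 / (2 * s)) * (s / m) with hK
    have hK0 : 0 < K := by positivity
    have := aux_cov G ξ (fun ω => G ω + ξ ω) (fun ω => β * G ω - α * ξ ω) hMm hRm hind α β m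
      s.toNNReal _ hMl hRl
      (fun ω => by linear_combination (-G ω) * hαβ)
      (fun ω => by linear_combination (-ξ ω) * hαβ)
      (fun k => K * ((s / m) ^ k * I k m))
      (fun k => (aux_gauss s m hs hm k).symm) (by positivity)
    rw [this, Real.coe_toNNReal _ hr, hα, hβ]
    field_simp
    ring
  have hV : Tendsto (fun m => I 2 m / I 0 m - (I 1 m / I 0 m) ^ 2) atTop (nhds 1) := by
    have := ((hI 2).div (hI 0) (by simp)).sub (((hI 1).div (hI 0) (by simp)).pow 2)
    norm_num [Nat.factorial] at this
    exact this
  have hm2 : Tendsto (fun m : ℝ => (a + c) * (b + c) / m ^ 2) atTop (nhds 0) :=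
    Tendsto.const_div_atTop (tendsto_pow_atTop (by norm_num)) _
  constructor
  · have := (hm2.mul hV).add_const ((c ^ 2 - a * b) / s)
    rw [zero_mul, zero_add] at this
    exact this.congr' (key.mono fun m h => h.symm)
  · have h1 : Tendsto (fun m => (a + c) * (b + c) * (I 2 m / I 0 m - (I 1 m / I 0 m) ^ 2 - 1))
        atTop (nhds 0) := by
      simpa using (hV.sub_const 1).const_mul ((a + c) * (b + c))
    have h2 := ((isLittleO_one_iff ℝ).2 h1).mul_isBigO
      (isBigO_refl (fun m : ℝ => m ^ (-(2 : ℤ))) atTop)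
    refine h2.congr' ?_ (Eventually.of_forall fun m => by simp)
    filter_upwards [key] with m hm
    rw [hm]
    have : m ^ (-(2 : ℤ)) = (m ^ 2)⁻¹ := by rw [zpow_neg]; norm_cast
    rw [this]
    ring
end
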